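/- Let (d,v,u) be an admissible triple for (λ,μ). Then ud ∈ D_{I, A∩J·v}, i.e. ud is a distinguished double (W_I, W_{A∩J·v})-coset representative in W_r. -/

import Mathlib

/-!
Write `E k` for the basis vector `e_k`, extended to `k ∈ ℤ` by `E (-k) = -E k`.  Then
`E k · w = E (w⁻¹ k)`, and a root `E q - E p` is positive exactly when `p < q`
(`isPos_sub_iff`).  So every positivity condition becomes an inequality between integers.

The simple roots in `B` are the `E (i+1) - E i` with `1 ≤ i < r`, `i ≠ b`; the indices split into
the blocks `{1,…,b}` and `{b+1,…,r}`.  Elements of `W_B` preserve signs and blocks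
(`blocks_of_mem_Wpar`), and `d ∈ D_B̃` says that `d⁻¹` is increasing on each block.

* For `α = E (i+1) - E i ∈ I` we have `u⁻¹ i < u⁻¹ (i+1)` in a common block, so applying `d⁻¹`
  keeps the inequality: `α·(ud)` is positive.
* For `β = E (i+1) - E i ∈ A ∩ J·v`, put `p = d i` and `q = d (i+1)`; then `p < q` and
  `u p < u q` is wanted.  It is automatic unless `p, q` have the same sign and the same block.  In
  that case `|p|` and `|q|` are consecutive, since an element of the block strictly between them
  would be sent by `d⁻¹` strictly between `i` and `i+1` in absolute value.  Hence
  `β·d⁻¹ ∈ B ∩ J·v·d⁻¹`, and the condition on `u⁻¹` applies.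
-/

/- The hyperoctahedral group `W_r` (the Weyl group of type `B_r`), realized as the group
of permutations `w` of `{±1, …, ±r}` satisfying `(−i)w = −(iw)`.  We realize its elements
inside `Equiv.Perm ℤ`, letting `w` act on `i` on the *right* via `i·w := w⁻¹ i` (so that
`i·(wd) = (i·w)·d` and products of group elements can be written in the same order as in
the paper). -/

namespace QQS

abbrev G : Type := Equiv.Perm ℤ

/-- The generators `s₀ = (1,−1)` and `sᵢ = (i,i+1)(−i,−i−1)`. -/
def s (i : ℕ) : G :=
  if i = 0 then Equiv.swap 1 (-1)
  else Equiv.swap (i : ℤ) ((i : ℤ) + 1) * Equiv.swap (-(i : ℤ)) (-((i : ℤ) + 1))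

/-- The generating set `{s₀, s₁, …, s_{r−1}}` of `W_r`. -/
def gens (r : ℕ) : Set G := {x | ∃ i, i < r ∧ x = s i}

/-- Membership in `W_r`: permutations of `{±1, …, ±r}` commuting with negation. -/
def inW (r : ℕ) (w : G) : Prop :=
  (∀ i : ℤ, w (-i) = -(w i)) ∧ ∀ i : ℤ, (r : ℤ) < |i| → w i = i

/-- The length `ℓ(w)` of `w ∈ W_r` with respect to the generators `s₀, …, s_{r−1}`. -/
noncomputable def len (r : ℕ) (w : G) : ℕ :=
  sInf {n | ∃ l : List G, l.length = n ∧ (∀ x ∈ l, x ∈ gens r) ∧ l.prod = w}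

/-- The partial sum of the first `k` parts of a composition. -/
def psum (l : List ℕ) (k : ℕ) : ℕ := (l.take k).sum

end QQS
namespace QQS

/- The root system of type `B_r`.  `W_r` acts on the vector space `V` with basis
`e₁, …, e_r`; we realize a vector `x = ∑ xᵢ eᵢ ∈ V` as the odd function `ℤ → ℚ` with
value `xᵢ` at `i` and `−xᵢ` at `−i`.  The (right) action of `w` on `V` determined by
`eᵢ·w = e_{i·w}` if `i·w > 0` and `eᵢ·w = −e_{−(i·w)}` if `i·w < 0` then becomes
`x·w = x ∘ w`. -/

/-- The basis vector `eᵢ`, as an odd function `ℤ → ℚ`. -/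
def evec (i : ℕ) : ℤ → ℚ := fun j => if j = (i : ℤ) then 1 else if j = -(i : ℤ) then -1 else 0

/-- The simple roots: `α₀ = e₁` and `αᵢ = e_{i+1} − eᵢ` for `i ≥ 1`. -/
def sroot : ℕ → (ℤ → ℚ)
  | 0 => evec 1
  | i + 1 => evec (i + 2) - evec (i + 1)

/-- `Δ₀ = {α₀, α₁, …, α_{r−1}}`. -/
def Delta0 (r : ℕ) : Set (ℤ → ℚ) := {x | ∃ i, i < r ∧ x = sroot i}

/-- `Δ = Δ₀ ∖ {α₀}`. -/
def DeltaS (r : ℕ) : Set (ℤ → ℚ) := Delta0 r \ {sroot 0}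

/-- The right action of `w ∈ W_r` on `V`: `x·w = x ∘ w`. -/
def rAct (w : G) (x : ℤ → ℚ) : ℤ → ℚ := fun j => x (w j)

/-- `x` is a positive root: `eᵢ`, `eᵢ + eⱼ` or `eⱼ − eᵢ` with `1 ≤ i < j ≤ r`. -/
def isPos (r : ℕ) (x : ℤ → ℚ) : Prop :=
  (∃ i, 1 ≤ i ∧ i ≤ r ∧ x = evec i) ∨
  (∃ i j, 1 ≤ i ∧ i < j ∧ j ≤ r ∧ (x = evec i + evec j ∨ x = evec j - evec i))

/-- `D_K = {d ∈ W_r : α·d is a positive root for every α ∈ K}`. -/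
def DD (r : ℕ) (K : Set (ℤ → ℚ)) : Set G :=
  {d | inW r d ∧ ∀ α ∈ K, isPos r (rAct d α)}

/-- `D_{K,L} = D_K ∩ D_L⁻¹`. -/
def DDd (r : ℕ) (K L : Set (ℤ → ℚ)) : Set G := {d | d ∈ DD r K ∧ d⁻¹ ∈ DD r L}

/-- For `M ⊆ Δ₀`, the parabolic subgroup `W_M`, generated by the reflections `s_α`
for `α ∈ M` (the reflection in the hyperplane orthogonal to `αᵢ` is `sᵢ`). -/
def Wpar (r : ℕ) (M : Set (ℤ → ℚ)) : Subgroup G :=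
  Subgroup.closure {w | ∃ i, i < r ∧ sroot i ∈ M ∧ w = s i}

/-- `D^M_{K,L} = D_K ∩ D_L⁻¹ ∩ W_M`. -/
def DDm (r : ℕ) (K L M : Set (ℤ → ℚ)) : Set G := {d | d ∈ DDd r K L ∧ d ∈ Wpar r M}

end QQS
namespace QQS

/- Fix an `a`-bicomposition `λ = (l1, l2)` and a `b`-bicomposition `μ = (m1, m2)` in
`Λ(n,r)`.  The sets of simple roots `J, I ⊆ Δ`, and `Ã, B̃, A, B ⊆ Δ₀`. -/

/-- `j` is a partial sum of the composition `l`. -/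
def isPartialSum (l : List ℕ) (j : ℕ) : Prop := ∃ k, psum l k = j

/-- `{α_{off+j} : 1 ≤ j ≤ l.sum − 1, j not a partial sum of l}`. -/
def compRoots (off : ℕ) (l : List ℕ) : Set (ℤ → ℚ) :=
  {x | ∃ j, 1 ≤ j ∧ j + 1 ≤ l.sum ∧ ¬ isPartialSum l j ∧ x = sroot (off + j)}

/-- `J = J₁ ∪ J₂ ⊆ Δ` associated to the bicomposition `(l1, l2)`. -/
def Jset (l1 l2 : List ℕ) : Set (ℤ → ℚ) := compRoots 0 l1 ∪ compRoots l1.sum l2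

/-- `Ã = Δ₀ ∖ {α_a}` if `a ≠ r`, and `Ã = Δ₀` if `a = r`. -/
def Atil (r a : ℕ) : Set (ℤ → ℚ) := if a = r then Delta0 r else Delta0 r \ {sroot a}

/-- `A = Ã ∖ {α₀}`. -/
def Aset (r a : ℕ) : Set (ℤ → ℚ) := Atil r a \ {sroot 0}

/-- An admissible triple `(d, v, u)` for `(λ, μ)`: `d ∈ D_{B̃,Ã}`,
`v ∈ D^A_{J, B·d ∩ A}` and `u ∈ D^B_{I, B ∩ J·v·d⁻¹}`. -/
def Admissible (r a b : ℕ) (l1 l2 m1 m2 : List ℕ) (d v u : G) : Prop :=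
  d ∈ DDd r (Atil r b) (Atil r a) ∧
  v ∈ DDm r (Jset l1 l2) ((rAct d '' Aset r b) ∩ Aset r a) (Aset r a) ∧
  u ∈ DDm r (Jset m1 m2) (Aset r b ∩ (rAct d⁻¹ '' (rAct v '' Jset l1 l2))) (Aset r b)

end QQS
namespace QQS

/-! ### Signed basis vectors and positivity -/

/-- The basis vector `e_k` indexed by any integer `k`, so that `e_{-k} = -e_k` for `k ≠ 0`. -/
def E (k : ℤ) : ℤ → ℚ := fun j => if j = k then 1 else if j = -k then -1 else 0

lemma evec_eq (i : ℕ) : evec i = E i := rfl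

lemma sroot_eq {i : ℕ} (hi : 1 ≤ i) : sroot i = E (i + 1) - E i := by
  obtain ⟨k, rfl⟩ : ∃ k, i = k + 1 := ⟨i - 1, by omega⟩
  simp only [sroot, evec_eq]
  push_cast
  norm_num [add_assoc]

lemma E_neg {k : ℤ} (hk : k ≠ 0) : E (-k) = -E k := by
  funext j
  simp only [E, Pi.neg_apply]
  split_ifs <;> first | omega | norm_num

lemma inW_mul {r : ℕ} {w x : G} (hw : inW r w) (hx : inW r x) : inW r (w * x) := by
  refine ⟨fun i => ?_, fun i hi => ?_⟩
  · simp [Equiv.Perm.mul_apply, hx.1, hw.1]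
  · simp [Equiv.Perm.mul_apply, hx.2 i hi, hw.2 i hi]

lemma inW_inv {r : ℕ} {w : G} (hw : inW r w) : inW r w⁻¹ := by
  refine ⟨fun i => ?_, fun i hi => ?_⟩
  · rw [Equiv.Perm.inv_eq_iff_eq, hw.1, show w (w⁻¹ i) = i from w.apply_symm_apply i]
  · rw [Equiv.Perm.inv_eq_iff_eq, hw.2 i hi]

/-- `i ∈ {±1, …, ±r}`. -/
def Idx (r : ℕ) (i : ℤ) : Prop := i ≠ 0 ∧ |i| ≤ r

lemma inW_idx {r : ℕ} {w : G} (hw : inW r w) {i : ℤ} (hi : Idx r i) : Idx r (w i) := by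
  have h0 : w 0 = 0 := by have := hw.1 0; simp at this; omega
  refine ⟨fun h => hi.1 (w.injective (h.trans h0.symm)), ?_⟩
  by_contra! h
  have := w.injective (hw.2 _ h)
  rw [this] at h
  exact absurd hi.2 (not_le.mpr h)

lemma inW_ne {r : ℕ} {w : G} (hw : inW r w) {i j : ℤ} (h : |i| ≠ |j|) : |w i| ≠ |w j| := by
  intro h'
  rcases abs_eq_abs.mp h' with h' | h'
  · exact h (congrArg _ (w.injective h'))
  · rw [← hw.1] at h'
    exact h (by rw [w.injective h', abs_neg])

lemma rAct_sub {r : ℕ} {w : G} (hw : inW r w) (q p : ℤ) :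
    rAct w (E q - E p) = E (w⁻¹ q) - E (w⁻¹ p) := by
  have key : ∀ k, rAct w (E k) = E (w⁻¹ k) := by
    intro k
    funext j
    have h1 : j = w⁻¹ k ↔ w j = k := by rw [Equiv.Perm.eq_inv_iff_eq]
    have h2 : j = -w⁻¹ k ↔ w j = -k := by
      rw [← (inW_inv hw).1, Equiv.Perm.eq_inv_iff_eq]
    simp only [rAct, E, h1, h2]
  rw [← key, ← key]
  rfl

/-- A positive root has positive leading coefficient. -/
lemma isPos_lead {r : ℕ} {x : ℤ → ℚ} (h : isPos r x) :
    ∃ j : ℤ, 0 < j ∧ 0 < x j ∧ ∀ k, j < k → x k = 0 := by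
  rcases h with ⟨i, h1, -, rfl⟩ | ⟨i, j, h1, h2, -, rfl | rfl⟩
  · refine ⟨i, by omega, by simp [evec], fun k hk => ?_⟩
    simp only [evec]
    split_ifs <;> first | omega | rfl
  all_goals
    refine ⟨j, by omega, ?_, fun k hk => ?_⟩
    · simp only [evec, Pi.add_apply, Pi.sub_apply]
      split_ifs <;> first | omega | norm_num
    · simp only [evec, Pi.add_apply, Pi.sub_apply]
      split_ifs <;> first | omega | norm_num

lemma not_isPos_neg {r : ℕ} {x : ℤ → ℚ} (h : isPos r x) : ¬ isPos r (-x) := by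
  intro h'
  obtain ⟨j, -, h1, h2⟩ := isPos_lead h
  obtain ⟨k, -, h3, h4⟩ := isPos_lead h'
  simp only [Pi.neg_apply] at h3 h4
  rcases lt_trichotomy j k with hjk | rfl | hjk
  · linarith [h2 k hjk]
  · linarith
  · linarith [h4 j hjk]

lemma isPos_sub {r : ℕ} {p q : ℤ} (hp : Idx r p) (hq : Idx r q) (hpq : |p| ≠ |q|) (h : p < q) :
    isPos r (E q - E p) := by
  obtain ⟨hp0, hpr⟩ := hp
  obtain ⟨hq0, hqr⟩ := hq
  right
  rcases lt_or_gt_of_ne hp0 with hp' | hp'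
  · obtain ⟨m, rfl⟩ : ∃ m : ℕ, p = -(m : ℤ) := ⟨p.natAbs, by omega⟩
    rw [E_neg (by omega)]
    rcases lt_or_gt_of_ne hq0 with hq' | hq'
    · obtain ⟨k, rfl⟩ : ∃ k : ℕ, q = -(k : ℤ) := ⟨q.natAbs, by omega⟩
      simp only [abs_neg, Nat.abs_cast] at *
      rw [E_neg (by omega)]
      exact ⟨k, m, by omega, by omega, by omega, Or.inr (by simp only [evec_eq]; abel)⟩
    · obtain ⟨k, rfl⟩ : ∃ k : ℕ, q = k := ⟨q.natAbs, by omega⟩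
      simp only [abs_neg, Nat.abs_cast] at *
      rcases lt_or_gt_of_ne hpq with hl | hl
      · exact ⟨m, k, by omega, by omega, by omega, Or.inl (by simp only [evec_eq]; abel)⟩
      · exact ⟨k, m, by omega, by omega, by omega, Or.inl (by simp only [evec_eq]; abel)⟩
  · obtain ⟨m, rfl⟩ : ∃ m : ℕ, p = m := ⟨p.natAbs, by omega⟩
    obtain ⟨k, rfl⟩ : ∃ k : ℕ, q = k := ⟨q.natAbs, by omega⟩
    simp only [Nat.abs_cast] at *
    exact ⟨m, k, by omega, by omega, by omega, Or.inr rfl⟩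

lemma isPos_sub_iff {r : ℕ} {p q : ℤ} (hp : Idx r p) (hq : Idx r q) (hpq : |p| ≠ |q|) :
    isPos r (E q - E p) ↔ p < q := by
  refine ⟨fun h => ?_, isPos_sub hp hq hpq⟩
  by_contra! hle
  have hne : q ≠ p := fun h => hpq (by rw [h])
  refine not_isPos_neg h ?_
  rw [neg_sub]
  exact isPos_sub hq hp hpq.symm (lt_of_le_of_ne hle hne)

/-- `αᵢ·w` is a positive root exactly when `w⁻¹` has an ascent at `i`. -/
lemma isPos_rAct {r : ℕ} {w : G} (hw : inW r w) {i : ℕ} (h1 : 1 ≤ i) (h2 : i < r) :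
    isPos r (rAct w (sroot i)) ↔ w⁻¹ i < w⁻¹ (i + 1) := by
  have hw' := inW_inv hw
  rw [sroot_eq h1, rAct_sub hw]
  refine isPos_sub_iff (inW_idx hw' ⟨by omega, ?_⟩) (inW_idx hw' ⟨by omega, ?_⟩) (inW_ne hw' ?_)
  all_goals grind

/-! ### Simple roots, blocks and the parabolic subgroup `W_B` -/

lemma sroot_inj {i j : ℕ} (h : sroot i = sroot j) : i = j := by
  -- `i + 1` is the largest index in the support of `sroot i`
  have key : ∀ m : ℕ, sroot m ((m : ℤ) + 1) = 1 ∧ ∀ k : ℤ, (m : ℤ) + 1 < k → sroot m k = 0 := by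
    rintro (_ | m)
    · refine ⟨by simp [sroot, evec], fun k hk => ?_⟩
      simp only [sroot, evec]
      split_ifs <;> first | omega | rfl
    · rw [sroot_eq (by omega)]
      refine ⟨?_, fun k hk => ?_⟩ <;> simp only [E, Pi.sub_apply] <;> push_cast at * <;>
        split_ifs <;> first | omega | norm_num
  rcases lt_trichotomy i j with hij | hij | hij
  · have h1 := (key j).1
    rw [← h, (key i).2 _ (by omega)] at h1
    norm_num at h1
  · exact hij
  · have h1 := (key i).1
    rw [h, (key j).2 _ (by omega)] at h1
    norm_num at h1

lemma mem_Aset {r b : ℕ} {x : ℤ → ℚ} :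
    x ∈ Aset r b ↔ ∃ i, 1 ≤ i ∧ i < r ∧ i ≠ b ∧ x = sroot i := by
  constructor
  · rintro ⟨hx, h0⟩
    unfold Atil at hx
    split_ifs at hx with hb
    · obtain ⟨i, hi, rfl⟩ := hx
      exact ⟨i, Nat.pos_of_ne_zero fun h => h0 (by simp [h]), hi, by omega, rfl⟩
    · obtain ⟨⟨i, hi, rfl⟩, h1⟩ := hx
      exact ⟨i, Nat.pos_of_ne_zero fun h => h0 (by simp [h]), hi, fun h => h1 (by simp [h]), rfl⟩
  · rintro ⟨i, h1, h2, h3, rfl⟩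
    refine ⟨?_, fun h => ?_⟩
    · unfold Atil
      split_ifs with hb
      · exact ⟨i, h2, rfl⟩
      · exact ⟨⟨i, h2, rfl⟩, fun h => h3 (sroot_inj h)⟩
    · have := sroot_inj (j := 0) h
      omega

lemma Jset_subset {r b : ℕ} {m1 m2 : List ℕ} (hb : m1.sum = b) (hr : m1.sum + m2.sum = r) :
    Jset m1 m2 ⊆ Aset r b := by
  rintro x (⟨j, h1, h2, -, rfl⟩ | ⟨j, h1, h2, -, rfl⟩)
  · exact mem_Aset.mpr ⟨0 + j, by omega, by omega, by omega, rfl⟩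
  · exact mem_Aset.mpr ⟨m1.sum + j, by omega, by omega, by omega, rfl⟩

/-- Elements of `W_B` preserve the signs of integers and the blocks `{1,…,b}`, `{b+1,…,r}`. -/
lemma blocks_of_mem_Wpar {r b : ℕ} {w : G} (hw : w ∈ Wpar r (Aset r b)) (k : ℤ) :
    (0 < w k ↔ 0 < k) ∧ (w k ≤ b ↔ k ≤ b) := by
  unfold Wpar at hw
  induction hw using Subgroup.closure_induction generalizing k with
  | mem x hx =>
    obtain ⟨i, hi, hB, rfl⟩ := hx
    obtain ⟨j, h1, h2, h3, h4⟩ := mem_Aset.mp hB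
    obtain rfl := sroot_inj h4
    simp only [s, if_neg (show i ≠ 0 by omega), Equiv.Perm.mul_apply, Equiv.swap_apply_def]
    constructor <;> split_ifs <;> omega
  | one => simp
  | mul x y _ _ hx hy => exact ⟨(hx _).1.trans (hy _).1, (hx _).2.trans (hy _).2⟩
  | inv x _ hx =>
    have := hx (x⁻¹ k)
    rw [show x (x⁻¹ k) = k from x.apply_symm_apply k] at this
    exact ⟨this.1.symm, this.2.symm⟩

/-- A function without descents away from `b` is increasing on each of the two blocks. -/
lemma mono_block {r b : ℕ} {f : ℤ → ℤ}
    (hf : ∀ i : ℕ, 1 ≤ i → i < r → i ≠ b → f i < f (i + 1)) {p q : ℤ} (hp : 1 ≤ p)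
    (hpq : p < q) (hq : q ≤ r) (hb : q ≤ b ∨ b < p) : f p < f q := by
  have step : ∀ j : ℤ, 1 ≤ j → j < r → j ≠ b → f j < f (j + 1) := by
    intro j h1 h2 h3
    obtain ⟨m, rfl⟩ : ∃ m : ℕ, j = m := ⟨j.natAbs, by omega⟩
    exact hf m (by omega) (by omega) (by omega)
  have hpq' : p + 1 ≤ q := hpq
  clear hpq
  induction q, hpq' using Int.leInduction with
  | base => exact step p hp (by omega) (by omega)
  | succ n hn ih =>
    exact (ih (by omega) (by omega)).trans (step n (by omega) (by omega) (by omega))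

/-- Let `(d,v,u)` be an admissible triple for `(λ,μ)`.  Then `ud ∈ D_{I, A ∩ J·v}`, i.e. `ud` is a distinguished double `(W_I, W_{A∩J·v})`-coset representative in `W_r`. -/
theorem ud_mem_dist (n r a b : ℕ) (l1 l2 m1 m2 : List ℕ)
    (hla : l1.sum = a) (hlr : l1.sum + l2.sum = r) (hln : l1.length + l2.length = n)
    (hmb : m1.sum = b) (hmr : m1.sum + m2.sum = r) (hmn : m1.length + m2.length = n)
    (d v u : G) (hadm : Admissible r a b l1 l2 m1 m2 d v u) :
    u * d ∈ DDd r (Jset m1 m2) (Aset r a ∩ (rAct v '' Jset l1 l2)) := by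
  obtain ⟨⟨⟨hd, hdB⟩, hd', hdA⟩, -, ⟨⟨hu, huI⟩, hu', huB⟩, huW⟩ := hadm
  have hmono : ∀ i : ℕ, 1 ≤ i → i < r → i ≠ b → d⁻¹ i < d⁻¹ (i + 1) := fun i h1 h2 h3 =>
    (isPos_rAct hd h1 h2).mp (hdB _ (mem_Aset.mpr ⟨i, h1, h2, h3, rfl⟩).1)
  refine ⟨⟨inW_mul hu hd, fun α hα => ?_⟩, inW_inv (inW_mul hu hd), fun β hβ => ?_⟩
  · obtain ⟨i, h1, h2, h3, rfl⟩ := mem_Aset.mp (Jset_subset hmb hmr hα)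
    have hlt := (isPos_rAct hu h1 h2).mp (huI _ hα)
    rw [isPos_rAct (inW_mul hu hd) h1 h2, mul_inv_rev, Equiv.Perm.mul_apply, Equiv.Perm.mul_apply]
    have e1 := blocks_of_mem_Wpar (inv_mem huW) (i : ℤ)
    have e2 := blocks_of_mem_Wpar (inv_mem huW) ((i : ℤ) + 1)
    have e3 : |u⁻¹ ((i : ℤ) + 1)| ≤ r := (inW_idx hu' ⟨by omega, by grind⟩).2
    have e4 := le_abs_self (u⁻¹ ((i : ℤ) + 1))
    exact mono_block hmono (by omega) hlt (by omega) (by omega)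
  · obtain ⟨hA, hJ⟩ := hβ
    obtain ⟨i, h1, h2, h3, rfl⟩ := mem_Aset.mp hA
    have hlt := (isPos_rAct hd' h1 h2).mp (hdA _ hA.1)
    rw [isPos_rAct (inW_inv (inW_mul hu hd)) h1 h2, inv_inv, Equiv.Perm.mul_apply,
      Equiv.Perm.mul_apply]
    rw [inv_inv] at hlt
    have hact : rAct d⁻¹ (sroot i) = E (d (i + 1)) - E (d i) := by
      rw [sroot_eq h1, rAct_sub hd', inv_inv]
    have hip := inW_idx hd (i := (i : ℤ)) ⟨by omega, by grind⟩
    have hiq := inW_idx hd (i := (i : ℤ) + 1) ⟨by omega, by grind⟩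
    have hdp : d⁻¹ (d i) = i := d.symm_apply_apply _
    have hdq : d⁻¹ (d (i + 1)) = i + 1 := d.symm_apply_apply _
    generalize d i = p at *
    generalize d (i + 1) = q at *
    obtain ⟨hp0, hpr⟩ := hip
    obtain ⟨hq0, hqr⟩ := hiq
    rw [abs_le] at hpr hqr
    -- the condition on `u⁻¹`, available as soon as `β·d⁻¹` is a simple root in `B`
    have hB : ∀ m : ℕ, 1 ≤ m → m < r → m ≠ b → rAct d⁻¹ (sroot i) = sroot m →
        u m < u (m + 1) := fun m k1 k2 k3 k4 => by
      have := (isPos_rAct hu' k1 k2).mp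
        (huB _ ⟨mem_Aset.mpr ⟨m, k1, k2, k3, rfl⟩, sroot i, hJ, k4⟩)
      rwa [inv_inv] at this
    have e1 := blocks_of_mem_Wpar huW p
    have e2 := blocks_of_mem_Wpar huW q
    rcases lt_or_gt_of_ne hp0 with hp | hp
    · rcases lt_or_gt_of_ne hq0 with hq | hq
      · have e3 := blocks_of_mem_Wpar huW (-p)
        have e4 := blocks_of_mem_Wpar huW (-q)
        have hup := hu.1 p
        have huq := hu.1 q
        have hnp := hd'.1 p
        have hnq := hd'.1 q
        by_cases hbl : -p ≤ b ∨ b < -q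
        · have hcons : -p = -q + 1 := by
            by_contra hne
            have k1 := mono_block hmono (p := -q) (q := -q + 1) (by omega) (by omega) (by omega)
              (by omega)
            have k2 := mono_block hmono (p := -q + 1) (q := -p) (by omega) (by omega) (by omega)
              (by omega)
            omega
          obtain ⟨m, hm⟩ : ∃ m : ℕ, -q = m := ⟨q.natAbs, by omega⟩
          have := hB m (by omega) (by omega) (by omega) (by
            rw [hact, sroot_eq (by omega), ← hm, ← hcons, E_neg hp0, E_neg hq0]
            abel)
          rw [← hm, ← hcons] at this
          omega
        · omega
      · omega
    · by_cases hbl : q ≤ b ∨ b < p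
      · have hcons : q = p + 1 := by
          by_contra hne
          have k1 := mono_block hmono (p := p) (q := p + 1) (by omega) (by omega) (by omega)
            (by omega)
          have k2 := mono_block hmono (p := p + 1) (q := q) (by omega) (by omega) (by omega)
            (by omega)
          omega
        obtain ⟨m, hm⟩ : ∃ m : ℕ, p = m := ⟨p.natAbs, by omega⟩
        have := hB m (by omega) (by omega) (by omega) (by
          rw [hact, sroot_eq (by omega), ← hm, ← hcons])
        rwa [← hm, ← hcons] at this
      · omega

end QQS
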